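/- Logarithmic uncertainty principle for the QP-WPT: let f and ψ be Schwartz functions on ℝ and fix α > 0. Then ‖ψ‖²_{L²(ℝ)} · ∫_ℝ ln|t| · |f(t)|² dt + ∫_ℝ ∫_ℝ ln|ξ| · |W^μ_f(ξ, β, α)|² dξ dβ ≥ (Γ'(1/4)/Γ(1/4) − ln π − ln b) · ‖f‖²_{L²(ℝ)} ‖ψ‖²_{L²(ℝ)}, where Γ'(1/4)/Γ(1/4) is the logarithmic derivative of the Gamma function at 1/4. -/

import Mathlib

open MeasureTheory Complex

/-- The constant √(b/(2πi)) = √(b/(2π))·e^{−iπ/4}. -/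
noncomputable def qpConst (b : ℝ) : ℂ :=
  (Real.sqrt (b / (2 * Real.pi)) : ℂ) * Complex.exp (-((Real.pi / 4 : ℝ) : ℂ) * Complex.I)

/-- The dilation ψ_α(t) = α^{−1/2} ψ(t/α). -/
noncomputable def dil (ψ : ℝ → ℂ) (α : ℝ) (t : ℝ) : ℂ :=
  ((α ^ (-(1 / 2 : ℝ)) : ℝ) : ℂ) * ψ (t / α)

/-- The quadratic-phase Fourier transform. -/
noncomputable def QPFT (a b c d e : ℝ) (f : ℝ → ℂ) (ξ : ℝ) : ℂ :=
  qpConst b * ∫ t : ℝ, f t *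
    Complex.exp (Complex.I * ((a * t ^ 2 + b * t * ξ + c * ξ ^ 2 + d * t + e * ξ : ℝ) : ℂ))

/-- The quadratic-phase wave packet transform of `f` with respect to the wavelet `ψ`. -/
noncomputable def QPWPT (a b c d e : ℝ) (ψ f : ℝ → ℂ) (ξ β α : ℝ) : ℂ :=
  qpConst b * ∫ t : ℝ,
    Complex.exp (Complex.I * ((2 * a * t ^ 2 + b * t * ξ + c * ξ ^ 2 + 2 * d * t + e * ξ
      - a * β ^ 2 - d * β : ℝ) : ℂ)) * f t * (starRingEnd ℂ) (dil ψ α (t - β))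

/-- The analyzing packet ψ^μ_{ξ,β,α}. -/
noncomputable def qpwPacket (a b c d e : ℝ) (ψ : ℝ → ℂ) (ξ β α : ℝ) (t : ℝ) : ℂ :=
  (starRingEnd ℂ) (qpConst b) *
    Complex.exp (-Complex.I * ((2 * a * t ^ 2 + b * t * ξ + c * ξ ^ 2 + 2 * d * t + e * ξ
      - a * β ^ 2 - d * β : ℝ) : ℂ)) * dil ψ α (t - β)


open Set

lemma lint_gamma {p r : ℝ} (hp : 0 < p) (hr : 0 < r) :
    ∫⁻ t in Ioi (0:ℝ), ENNReal.ofReal (t ^ (p - 1) * Real.exp (-(r * t)))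
      = ENNReal.ofReal (Real.Gamma p * r ^ (-p)) := by
  have h := Real.integral_rpow_mul_exp_neg_mul_Ioi hp hr
  have hpos : 0 < (1 / r) ^ p * Real.Gamma p := by positivity
  rw [← ofReal_integral_eq_lintegral_ofReal]
  · rw [h, one_div, Real.inv_rpow hr.le, Real.rpow_neg hr.le, mul_comm]
  · by_contra hni
    rw [integral_undef hni] at h
    linarith
  · filter_upwards [ae_restrict_mem measurableSet_Ioi] with t ht
    have : (0:ℝ) < t := ht
    positivity

lemma lint_beta {p q : ℝ} (hp : 0 < p) (hq : 0 < q) :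
    ∫⁻ ν in Ioi (0:ℝ), ENNReal.ofReal (ν ^ (p - 1) * (1 + ν) ^ (-(p + q)))
      = ENNReal.ofReal (Real.Gamma p * Real.Gamma q / Real.Gamma (p + q)) := by
  have hpq : 0 < Real.Gamma (p + q) := by positivity
  have key : ENNReal.ofReal (Real.Gamma (p + q)) *
      ∫⁻ ν in Ioi (0:ℝ), ENNReal.ofReal (ν ^ (p - 1) * (1 + ν) ^ (-(p + q)))
      = ENNReal.ofReal (Real.Gamma p * Real.Gamma q) := by
    rw [← lintegral_const_mul' _ _ ENNReal.ofReal_ne_top]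
    calc _ = ∫⁻ ν in Ioi (0:ℝ), ∫⁻ τ in Ioi (0:ℝ),
          ENNReal.ofReal (ν ^ (p - 1) * (τ ^ (p + q - 1) * Real.exp (-((1 + ν) * τ)))) := by
          refine setLIntegral_congr_fun measurableSet_Ioi fun ν hν => ?_
          have hν' : (0:ℝ) < ν := hν
          have e : ∀ τ : ℝ, ENNReal.ofReal (ν ^ (p - 1) * (τ ^ (p + q - 1) * Real.exp (-((1 + ν) * τ))))
            = ENNReal.ofReal (ν ^ (p - 1)) * ENNReal.ofReal (τ ^ (p + q - 1) * Real.exp (-((1 + ν) * τ))) :=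
            fun τ => ENNReal.ofReal_mul (by positivity)
          simp_rw [e]
          rw [lintegral_const_mul' _ _ ENNReal.ofReal_ne_top, lint_gamma (by positivity) (by positivity),
            ← ENNReal.ofReal_mul (by positivity), ← ENNReal.ofReal_mul (by positivity)]
          congr 1; ring
      _ = ∫⁻ τ in Ioi (0:ℝ), ∫⁻ ν in Ioi (0:ℝ),
          ENNReal.ofReal (ν ^ (p - 1) * (τ ^ (p + q - 1) * Real.exp (-((1 + ν) * τ)))) := by
          apply lintegral_lintegral_swap
          apply Measurable.aemeasurable
          unfold Function.uncurry
          fun_prop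
      _ = ∫⁻ τ in Ioi (0:ℝ), ENNReal.ofReal (Real.Gamma p) * ENNReal.ofReal (τ ^ (q - 1) * Real.exp (-(1 * τ))) := by
          refine setLIntegral_congr_fun measurableSet_Ioi fun τ hτ => ?_
          have hτ' : (0:ℝ) < τ := hτ
          have e : ∀ ν : ℝ, ENNReal.ofReal (ν ^ (p - 1) * (τ ^ (p + q - 1) * Real.exp (-((1 + ν) * τ))))
            = ENNReal.ofReal (τ ^ (p + q - 1) * Real.exp (-τ)) * ENNReal.ofReal (ν ^ (p - 1) * Real.exp (-(τ * ν))) := by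
            intro ν
            rw [← ENNReal.ofReal_mul (by positivity)]
            congr 1
            rw [show -((1 + ν) * τ) = -τ + -(τ * ν) by ring, Real.exp_add]; ring
          simp_rw [e]
          rw [lintegral_const_mul' _ _ ENNReal.ofReal_ne_top, lint_gamma hp hτ',
            ← ENNReal.ofReal_mul (by positivity), ← ENNReal.ofReal_mul (by positivity)]
          congr 1
          rw [show q - 1 = (p + q - 1) + (-p) by ring, Real.rpow_add hτ', one_mul]; ring
      _ = _ := by
          rw [lintegral_const_mul' _ _ ENNReal.ofReal_ne_top, lint_gamma hq one_pos,
            ← ENNReal.ofReal_mul (by positivity)]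
          simp
  rw [ENNReal.ofReal_div_of_pos hpq, ← key, mul_comm, ENNReal.mul_div_cancel_right]
  · simpa using hpq
  · simp

lemma lint_gauss {l m : ℝ} (hl : 0 < l) (hm : 0 < m) (x : ℝ) :
    ∫⁻ y, ENNReal.ofReal (Real.exp (-(Real.pi * m * y ^ 2)) *
        (l ^ (-(1/2) : ℝ) * Real.exp (-(Real.pi * (x - y) ^ 2 / l))))
      = ENNReal.ofReal ((1 + l * m) ^ (-(1/2) : ℝ) *
        Real.exp (-(Real.pi * m * x ^ 2 / (1 + l * m)))) := by
  have hpi := Real.pi_pos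
  set B : ℝ := Real.pi * (1 + l * m) / l with hB
  have hBp : 0 < B := by positivity
  have e : ∀ y : ℝ, Real.exp (-(Real.pi * m * y ^ 2)) *
        (l ^ (-(1/2) : ℝ) * Real.exp (-(Real.pi * (x - y) ^ 2 / l)))
      = (l ^ (-(1/2) : ℝ) * Real.exp (-(Real.pi * m * x ^ 2 / (1 + l * m)))) *
        Real.exp (-B * (y - x / (1 + l * m)) ^ 2) := by
    intro y
    rw [mul_left_comm, mul_assoc, ← Real.exp_add]
    rw [mul_assoc, ← Real.exp_add]
    congr 2
    rw [hB]; field_simp; ring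
  simp_rw [e]
  rw [← ofReal_integral_eq_lintegral_ofReal]
  · rw [integral_const_mul, integral_sub_right_eq_self (fun y => Real.exp (-B * y ^ 2)),
      integral_gaussian]
    congr 1
    have : Real.sqrt (Real.pi / B) = l ^ (1/2 : ℝ) * (1 + l * m) ^ (-(1/2) : ℝ) := by
      rw [Real.sqrt_eq_rpow, hB, show Real.pi / (Real.pi * (1 + l * m) / l) = l * (1 + l * m)⁻¹ by field_simp,
        Real.mul_rpow hl.le (by positivity), Real.inv_rpow (by positivity), Real.rpow_neg (by positivity)]
    rw [this]
    have h1 : l ^ (-(1/2) : ℝ) * l ^ (1/2 : ℝ) = 1 := by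
      rw [← Real.rpow_add hl]; norm_num
    linear_combination ((1 + l * m) ^ (-(1/2) : ℝ) * Real.exp (-(Real.pi * m * x ^ 2 / (1 + l * m)))) * h1
  · apply Integrable.const_mul
    exact (integrable_exp_neg_mul_sq hBp).comp_sub_right _
  · exact Filter.Eventually.of_forall fun y => by positivity

lemma lint_scale {m : ℝ} (hm : 0 < m) (F : ℝ → ENNReal) :
    ∫⁻ l in Ioi (0:ℝ), F (m * l) = ENNReal.ofReal m⁻¹ * ∫⁻ l in Ioi (0:ℝ), F l := by
  have h := lintegral_image_eq_lintegral_abs_deriv_mul (f := fun l : ℝ => m * l) (f' := fun _ => m)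
    (measurableSet_Ioi (a := (0:ℝ))) (fun x _ => by simpa using ((hasDerivAt_id x).const_mul m).hasDerivWithinAt)
    (fun x _ y _ h => by simpa [hm.ne'] using h) F
  have him : (fun l : ℝ => m * l) '' Ioi 0 = Ioi 0 := by
    simpa using Set.image_mul_left_Ioi hm 0
  rw [him] at h
  rw [h, lintegral_const_mul' _ _ ENNReal.ofReal_ne_top, ← mul_assoc, ← ENNReal.ofReal_mul (by positivity),
    abs_of_pos hm, inv_mul_cancel₀ hm.ne']
  simp


lemma riesz_eval {s : ℝ} (hs : 0 < s) (hs1 : s < 1) {x : ℝ} (hx : x ≠ 0) :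
    ∫⁻ l in Ioi (0:ℝ), ∫⁻ y, ENNReal.ofReal (l ^ (s / 2 - 1)) *
      (ENNReal.ofReal (|y| ^ (-(1 + s) / 2)) *
        ENNReal.ofReal (l ^ (-(1/2) : ℝ) * Real.exp (-(Real.pi * (x - y) ^ 2 / l))))
    = ENNReal.ofReal (Real.pi ^ (s / 2) * Real.Gamma (s / 2) *
        (Real.Gamma ((1 - s) / 4) / Real.Gamma ((1 + s) / 4)) ^ 2 * |x| ^ ((s - 1) / 2)) := by
  have hpi := Real.pi_pos
  set k : ℝ := (1 + s) / 4 with hk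
  set q : ℝ := (1 - s) / 4 with hq
  have hkp : 0 < k := by rw [hk]; linarith
  have hqp : 0 < q := by rw [hq]; linarith
  have hΓk : 0 < Real.Gamma k := by positivity
  have hΓq : 0 < Real.Gamma q := by positivity
  set κ : ℝ := Real.pi ^ k / Real.Gamma k with hκ
  have hκp : 0 < κ := by positivity
  have hx2 : 0 < x ^ 2 := by positivity
  have h1 : ∀ y : ℝ, y ≠ 0 → ENNReal.ofReal (|y| ^ (-(1 + s) / 2)) = ENNReal.ofReal κ *
      ∫⁻ m in Ioi (0:ℝ), ENNReal.ofReal (m ^ (k - 1) * Real.exp (-((Real.pi * y ^ 2) * m))) := by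
    intro y hy
    rw [lint_gamma hkp (by positivity), ← ENNReal.ofReal_mul hκp.le]
    congr 1
    rw [Real.mul_rpow hpi.le (by positivity), ← sq_abs y, ← Real.rpow_natCast |y| 2,
      ← Real.rpow_mul (abs_nonneg y), hκ, Real.rpow_neg hpi.le]
    rw [show ((2:ℕ):ℝ) * -k = -(1 + s) / 2 by rw [hk]; push_cast; ring]
    have : Real.pi ^ k ≠ 0 := by positivity
    field_simp
  have h2 : ∀ l ∈ Ioi (0:ℝ), (∫⁻ y, ENNReal.ofReal (l ^ (s / 2 - 1)) *
      (ENNReal.ofReal (|y| ^ (-(1 + s) / 2)) *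
        ENNReal.ofReal (l ^ (-(1/2) : ℝ) * Real.exp (-(Real.pi * (x - y) ^ 2 / l)))))
      = ENNReal.ofReal κ * ∫⁻ m in Ioi (0:ℝ), ENNReal.ofReal (l ^ (s / 2 - 1) * m ^ (k - 1) *
        ((1 + l * m) ^ (-(1/2) : ℝ) * Real.exp (-(Real.pi * m * x ^ 2 / (1 + l * m))))) := by
    intro l hl
    have hl' : (0:ℝ) < l := hl
    calc _ = ∫⁻ y, ∫⁻ m in Ioi (0:ℝ), ENNReal.ofReal κ * (ENNReal.ofReal (l ^ (s / 2 - 1) * m ^ (k - 1)) *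
          ENNReal.ofReal (Real.exp (-(Real.pi * m * y ^ 2)) *
          (l ^ (-(1/2) : ℝ) * Real.exp (-(Real.pi * (x - y) ^ 2 / l))))) := by
          refine lintegral_congr_ae ?_
          have : ∀ᵐ y : ℝ, y ≠ 0 := by
            simp [ae_iff]
          filter_upwards [this] with y hy
          rw [h1 y hy]
          rw [mul_comm (ENNReal.ofReal κ), mul_assoc, ← mul_assoc, mul_comm, ← mul_assoc,
            ← lintegral_const_mul' _ _ (by finiteness)]
          refine setLIntegral_congr_fun measurableSet_Ioi fun m hm => ?_
          have hm' : (0:ℝ) < m := hm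
          rw [← ENNReal.ofReal_mul (by positivity), ← ENNReal.ofReal_mul (by positivity),
            ← ENNReal.ofReal_mul (by positivity), ← ENNReal.ofReal_mul (by positivity),
            ← ENNReal.ofReal_mul (by positivity)]
          congr 1
          rw [show Real.pi * y ^ 2 * m = Real.pi * m * y ^ 2 by ring]
          ring
      _ = ∫⁻ m in Ioi (0:ℝ), ∫⁻ y, ENNReal.ofReal κ * (ENNReal.ofReal (l ^ (s / 2 - 1) * m ^ (k - 1)) *
          ENNReal.ofReal (Real.exp (-(Real.pi * m * y ^ 2)) *
          (l ^ (-(1/2) : ℝ) * Real.exp (-(Real.pi * (x - y) ^ 2 / l))))) := by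
          apply lintegral_lintegral_swap
          apply Measurable.aemeasurable
          unfold Function.uncurry
          fun_prop
      _ = _ := by
          rw [← lintegral_const_mul' _ _ (by finiteness)]
          refine setLIntegral_congr_fun measurableSet_Ioi fun m hm => ?_
          have hm' : (0:ℝ) < m := hm
          rw [lintegral_const_mul' _ _ (by finiteness), lintegral_const_mul' _ _ (by finiteness),
            lint_gauss hl' hm', ← ENNReal.ofReal_mul (by positivity)]
  rw [setLIntegral_congr_fun measurableSet_Ioi h2, lintegral_const_mul' _ _ (by finiteness)]
  rw [lintegral_lintegral_swap (by
          apply Measurable.aemeasurable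
          unfold Function.uncurry
          fun_prop)]
  have h3 : ∀ m ∈ Ioi (0:ℝ), (∫⁻ l in Ioi (0:ℝ), ENNReal.ofReal (l ^ (s / 2 - 1) * m ^ (k - 1) *
        ((1 + l * m) ^ (-(1/2) : ℝ) * Real.exp (-(Real.pi * m * x ^ 2 / (1 + l * m))))))
      = ∫⁻ ν in Ioi (0:ℝ), ENNReal.ofReal ((ν ^ (s / 2 - 1) * (1 + ν) ^ (-(1/2) : ℝ)) *
          (m ^ (q - 1) * Real.exp (-((Real.pi * x ^ 2 / (1 + ν)) * m)))) := by
    intro m hm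
    have hm' : (0:ℝ) < m := hm
    rw [← ENNReal.mul_right_inj (a := ENNReal.ofReal m⁻¹) (by simpa using hm') (by simp), ← lint_scale hm'
      (fun ν => ENNReal.ofReal ((ν ^ (s / 2 - 1) * (1 + ν) ^ (-(1/2) : ℝ)) *
          (m ^ (q - 1) * Real.exp (-((Real.pi * x ^ 2 / (1 + ν)) * m))))),
      ← lintegral_const_mul' _ _ (by finiteness)]
    refine setLIntegral_congr_fun measurableSet_Ioi fun l hl => ?_
    have hl' : (0:ℝ) < l := hl
    rw [← ENNReal.ofReal_mul (by positivity)]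
    congr 1
    rw [Real.mul_rpow hm'.le hl'.le, mul_comm m l,
      show Real.pi * x ^ 2 / (1 + l * m) * m = Real.pi * m * x ^ 2 / (1 + l * m) by ring]
    have : m ^ (s / 2 - 1) * m ^ (q - 1) = m⁻¹ * m ^ (k - 1) := by
      rw [← Real.rpow_neg_one, ← Real.rpow_add hm', ← Real.rpow_add hm']
      congr 1
      rw [hk, hq]; ring
    linear_combination (- l ^ (s / 2 - 1) * (1 + l * m) ^ (-(1/2) : ℝ) * Real.exp (-(Real.pi * m * x ^ 2 / (1 + l * m)))) * this
  rw [setLIntegral_congr_fun measurableSet_Ioi h3]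
  rw [lintegral_lintegral_swap (by
          apply Measurable.aemeasurable
          unfold Function.uncurry
          fun_prop)]
  have h4 : ∀ ν ∈ Ioi (0:ℝ), (∫⁻ m in Ioi (0:ℝ), ENNReal.ofReal ((ν ^ (s / 2 - 1) * (1 + ν) ^ (-(1/2) : ℝ)) *
          (m ^ (q - 1) * Real.exp (-((Real.pi * x ^ 2 / (1 + ν)) * m)))))
      = ENNReal.ofReal (Real.Gamma q * (Real.pi * x ^ 2) ^ (-q)) *
        ENNReal.ofReal (ν ^ (s / 2 - 1) * (1 + ν) ^ (-(s / 2 + q))) := by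
    intro ν hν
    have hν' : (0:ℝ) < ν := hν
    have e : ∀ m : ℝ, ENNReal.ofReal ((ν ^ (s / 2 - 1) * (1 + ν) ^ (-(1/2) : ℝ)) *
          (m ^ (q - 1) * Real.exp (-((Real.pi * x ^ 2 / (1 + ν)) * m))))
       = ENNReal.ofReal (ν ^ (s / 2 - 1) * (1 + ν) ^ (-(1/2) : ℝ)) *
         ENNReal.ofReal (m ^ (q - 1) * Real.exp (-((Real.pi * x ^ 2 / (1 + ν)) * m))) :=
      fun m => ENNReal.ofReal_mul (by positivity)
    simp_rw [e]
    rw [lintegral_const_mul' _ _ (by finiteness), lint_gamma hqp (by positivity),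
      ← ENNReal.ofReal_mul (by positivity), ← ENNReal.ofReal_mul (by positivity)]
    congr 1
    rw [Real.div_rpow (by positivity) (by positivity), Real.rpow_neg (by positivity : (0:ℝ) ≤ 1 + ν) q]
    have : (1 + ν) ^ (-(1/2) : ℝ) * (1 + ν) ^ q = (1 + ν) ^ (-(s / 2 + q)) := by
      rw [← Real.rpow_add (by positivity)]
      congr 1
      rw [hq]; ring
    rw [← this]
    have : (1 + ν) ^ q ≠ 0 := by positivity
    field_simp
  rw [setLIntegral_congr_fun measurableSet_Ioi h4, lintegral_const_mul' _ _ (by finiteness),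
    lint_beta (by positivity) hqp, ← ENNReal.ofReal_mul (by positivity), ← ENNReal.ofReal_mul (by positivity)]
  congr 1
  rw [show s / 2 + q = k by rw [hk, hq]; ring, hκ, Real.mul_rpow hpi.le hx2.le, ← sq_abs x,
    ← Real.rpow_natCast |x| 2, ← Real.rpow_mul (abs_nonneg x),
    show ((2:ℕ):ℝ) * -q = (s - 1) / 2 by rw [hq]; push_cast; ring]
  have : Real.pi ^ (s / 2) = Real.pi ^ k * Real.pi ^ (-q) := by
    rw [← Real.rpow_add hpi]
    congr 1
    rw [hk, hq]; ring
  rw [this]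
  field_simp


open scoped FourierTransform SchwartzMap

lemma fourier_swap {f g : ℝ → ℂ} (hf : Integrable f) (hg : Integrable g) :
    ∫ ξ, 𝓕 f ξ * g ξ = ∫ x, f x * 𝓕 g x := by
  simpa using! VectorFourier.integral_bilin_fourierIntegral_eq_flip (ContinuousLinearMap.mul ℂ ℂ)
    (L := innerₗ ℝ) Real.continuous_fourierChar continuous_inner hf hg

lemma gauss_fourier (g : 𝓢(ℝ, ℂ)) {l : ℝ} (hl : 0 < l) :
    ∫⁻ ξ, ENNReal.ofReal (Real.exp (-((Real.pi * ξ ^ 2) * l)) * ‖𝓕 g ξ‖ ^ 2)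
    ≤ ∫⁻ x, ∫⁻ y, ENNReal.ofReal ‖g x‖ * (ENNReal.ofReal ‖g y‖ *
        ENNReal.ofReal (l ^ (-(1/2) : ℝ) * Real.exp (-(Real.pi * (x - y) ^ 2 / l)))) := by
  have hpi := Real.pi_pos
  have hpl : 0 < Real.pi * l := by positivity
  set E : ℝ → ℝ → ℂ := fun x ξ =>
    Complex.exp (-Real.pi * (l : ℂ) * ξ ^ 2 + 2 * Real.pi * (Complex.I * (x : ℂ)) * ξ) with hE
  have hEn : ∀ x ξ, ‖E x ξ‖ = Real.exp (-(Real.pi * l) * ξ ^ 2) := by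
    intro x ξ
    rw [hE, Complex.norm_exp]
    congr 1
    have : (-(Real.pi:ℂ) * (l : ℂ) * (ξ:ℂ) ^ 2 + 2 * Real.pi * (Complex.I * (x : ℂ)) * ξ)
      = ((-(Real.pi * l) * ξ ^ 2 : ℝ) : ℂ) + ((2 * Real.pi * x * ξ : ℝ) : ℂ) * Complex.I := by
      push_cast; ring
    rw [this, Complex.add_re, Complex.ofReal_re, Complex.re_ofReal_mul, Complex.I_re, mul_zero, add_zero]
  have hEi : ∀ x, Integrable (E x) := by
    intro x
    refine (integrable_exp_neg_mul_sq hpl).mono' (by fun_prop) ?_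
    exact Filter.Eventually.of_forall fun ξ => (hEn x ξ).le
  have hEF : ∀ x y, ‖𝓕 (E x) y‖ = l ^ (-(1/2) : ℝ) * Real.exp (-(Real.pi * (x - y) ^ 2 / l)) := by
    intro x y
    rw [hE, fourier_gaussian_pi' (by simpa using hl)]
    simp only
    have : (-(Real.pi:ℂ) / (l : ℂ) * ((y:ℂ) + Complex.I * (Complex.I * (x : ℂ))) ^ 2)
      = ((-(Real.pi * (x - y) ^ 2 / l) : ℝ) : ℂ) := by
      rw [← mul_assoc, Complex.I_mul_I]
      push_cast; ring
    rw [this, norm_mul, ← Complex.ofReal_exp, Complex.norm_real, Real.norm_of_nonneg (by positivity),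
      norm_div, norm_one, show ((1:ℂ)/2) = ((1/2 : ℝ) : ℂ) by push_cast; rfl,
      ← Complex.ofReal_cpow hl.le, Complex.norm_real,
      Real.norm_of_nonneg (by positivity), Real.rpow_neg hl.le, one_div]
  set φ : ℝ → ℂ := fun ξ => (Real.exp (-((Real.pi * ξ ^ 2) * l)) : ℂ) * (starRingEnd ℂ) (𝓕 g ξ) with hφ
  have hbd : ∀ ξ, Real.exp (-((Real.pi * ξ ^ 2) * l)) ≤ 1 := fun ξ => by
    rw [Real.exp_le_one_iff]
    have : 0 ≤ Real.pi * ξ ^ 2 * l := by positivity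
    linarith
  have hφi : Integrable φ := by
    refine (𝓕 g).integrable.norm.mono' ?_ ?_
    · apply Continuous.aestronglyMeasurable
      have := (𝓕 g).continuous
      fun_prop
    · refine Filter.Eventually.of_forall fun ξ => ?_
      rw [hφ]
      simp only [norm_mul, RCLike.norm_conj, Complex.norm_real]
      rw [Real.norm_of_nonneg (by positivity)]
      exact mul_le_of_le_one_left (norm_nonneg _) (hbd ξ)
  have hφF : ∀ x, ‖𝓕 φ x‖ₑ ≤ ∫⁻ y, ENNReal.ofReal ‖g y‖ *
        ENNReal.ofReal (l ^ (-(1/2) : ℝ) * Real.exp (-(Real.pi * (x - y) ^ 2 / l))) := by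
    intro x
    have h1 : 𝓕 φ x = (starRingEnd ℂ) (∫ ξ, 𝓕 (g : ℝ → ℂ) ξ * E x ξ) := by
      rw [Real.fourier_real_eq_integral_exp_smul, ← integral_conj]
      congr 1
      ext ξ
      rw [hφ, hE]
      simp only [smul_eq_mul, map_mul]
      rw [← Complex.exp_conj, SchwartzMap.fourier_coe, Complex.ofReal_exp, ← mul_assoc,
        ← Complex.exp_add, mul_comm]
      congr 2
      have h2 : (starRingEnd ℂ) 2 = 2 := map_ofNat _ 2
      simp [h2]
      ring
    rw [h1, fourier_swap g.integrable (hEi x), RCLike.enorm_conj]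
    refine (enorm_integral_le_lintegral_enorm _).trans (le_of_eq ?_)
    congr 1
    ext y
    rw [enorm_mul, ← ofReal_norm, ← ofReal_norm, hEF]
  have hint : Integrable (fun ξ => Real.exp (-((Real.pi * ξ ^ 2) * l)) * ‖𝓕 g ξ‖ ^ 2) := by
    refine ((𝓕 g).memLp 2).integrable_norm_pow (by norm_num) |>.mono' ?_ ?_
    · apply Continuous.aestronglyMeasurable
      have := (𝓕 g).continuous
      fun_prop
    · refine Filter.Eventually.of_forall fun ξ => ?_
      rw [Real.norm_of_nonneg (by positivity)]
      exact mul_le_of_le_one_left (by positivity) (hbd ξ)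
  rw [← ofReal_integral_eq_lintegral_ofReal hint (Filter.Eventually.of_forall fun ξ => by positivity)]
  have h2 : ((∫ ξ, Real.exp (-((Real.pi * ξ ^ 2) * l)) * ‖𝓕 g ξ‖ ^ 2 : ℝ) : ℂ)
      = ∫ x, g x * 𝓕 φ x := by
    rw [← fourier_swap g.integrable hφi, ← integral_complex_ofReal]
    congr 1
    ext ξ
    rw [hφ, SchwartzMap.fourier_coe]
    simp only
    rw [mul_left_comm, Complex.mul_conj, Complex.normSq_eq_norm_sq]
    push_cast; rfl
  calc _ = ‖((∫ ξ, Real.exp (-((Real.pi * ξ ^ 2) * l)) * ‖𝓕 g ξ‖ ^ 2 : ℝ) : ℂ)‖ₑ := by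
        rw [← ofReal_norm, Complex.norm_real, Real.norm_of_nonneg]
        exact integral_nonneg fun ξ => by positivity
    _ ≤ ∫⁻ x, ‖g x * 𝓕 φ x‖ₑ := by
        rw [h2]; exact enorm_integral_le_lintegral_enorm _
    _ ≤ _ := by
        refine lintegral_mono fun x => ?_
        simp only
        rw [lintegral_const_mul' _ _ (by finiteness), enorm_mul, ofReal_norm]
        gcongr
        exact hφF x


noncomputable def pittD (s : ℝ) : ℝ :=
  Real.pi ^ s * (Real.Gamma ((1 - s) / 4) / Real.Gamma ((1 + s) / 4)) ^ 2

lemma ae_ne_zero' : ∀ᵐ y : ℝ, y ≠ 0 := by simp [ae_iff]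

lemma schur_l (g : 𝓢(ℝ, ℂ)) (s : ℝ) (G : ℝ → ℝ → ENNReal) (hG : Measurable (Function.uncurry G))
    (hsym : ∀ x y, G x y = G y x) :
    ∫⁻ x, ∫⁻ y, ENNReal.ofReal ‖g x‖ * (ENNReal.ofReal ‖g y‖ * G x y)
    ≤ ∫⁻ x, ∫⁻ y, ENNReal.ofReal (‖g x‖ ^ 2 * |x| ^ ((1 + s) / 2)) *
        (ENNReal.ofReal (|y| ^ (-(1 + s) / 2)) * G x y) := by
  have hgm : Measurable (fun x => ‖g x‖) := g.continuous.norm.measurable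
  have hG1 : Measurable (fun z : ℝ × ℝ => G z.1 z.2) := hG
  set P := ∫⁻ x, ∫⁻ y, ENNReal.ofReal (‖g x‖ ^ 2 * |x| ^ ((1 + s) / 2)) *
        (ENNReal.ofReal (|y| ^ (-(1 + s) / 2)) * G x y) with hP
  have hP2 : P = ∫⁻ x, ∫⁻ y, ENNReal.ofReal (‖g y‖ ^ 2 * |y| ^ ((1 + s) / 2)) *
        (ENNReal.ofReal (|x| ^ (-(1 + s) / 2)) * G x y) := by
    rw [hP, lintegral_lintegral_swap]
    · refine lintegral_congr fun x => lintegral_congr fun y => ?_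
      rw [hsym]
    · apply Measurable.aemeasurable
      unfold Function.uncurry
      fun_prop
  have hsum : 2 * ∫⁻ x, ∫⁻ y, ENNReal.ofReal ‖g x‖ * (ENNReal.ofReal ‖g y‖ * G x y) ≤ 2 * P := by
    rw [two_mul P]
    nth_rewrite 2 [hP2]
    rw [hP, ← lintegral_add_left, ← lintegral_const_mul' _ _ (by finiteness)]
    · refine lintegral_mono_ae ?_
      filter_upwards [ae_ne_zero'] with x hx
      rw [← lintegral_add_left, ← lintegral_const_mul' _ _ (by finiteness)]
      · refine lintegral_mono_ae ?_
        filter_upwards [ae_ne_zero'] with y hy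
        rw [← mul_assoc, ← mul_assoc, ← mul_assoc, ← mul_assoc, ← add_mul]
        gcongr
        have hx' := abs_pos.2 hx
        have hy' := abs_pos.2 hy
        rw [← ENNReal.ofReal_mul (by positivity), ← ENNReal.ofReal_mul (by positivity),
          ← ENNReal.ofReal_add (by positivity) (by positivity), mul_assoc,
          ← ENNReal.ofReal_mul (by positivity), show (2:ENNReal) = ENNReal.ofReal 2 by simp,
          ← ENNReal.ofReal_mul (by positivity)]
        apply ENNReal.ofReal_le_ofReal
        rw [show -(1 + s) / 2 = -((1 + s) / 2) by ring, Real.rpow_neg hx'.le, Real.rpow_neg hy'.le]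
        have hu : 0 < |x| ^ ((1 + s) / 2) := by positivity
        have hv : 0 < |y| ^ ((1 + s) / 2) := by positivity
        generalize |x| ^ ((1 + s) / 2) = u at *
        generalize |y| ^ ((1 + s) / 2) = v at *
        have : ‖g x‖ ^ 2 * u * v⁻¹ + ‖g y‖ ^ 2 * v * u⁻¹ - 2 * (‖g x‖ * ‖g y‖)
          = (‖g x‖ * u - ‖g y‖ * v) ^ 2 / (u * v) := by field_simp; ring
        have : 0 ≤ (‖g x‖ * u - ‖g y‖ * v) ^ 2 / (u * v) := by positivity
        linarith
      · have : Measurable (fun y => G x y) := hG1.comp (measurable_const.prodMk measurable_id)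
        fun_prop
    · apply Measurable.lintegral_prod_right
      fun_prop
  exact (ENNReal.mul_le_mul_iff_right (by norm_num) (by norm_num)).1 hsum

lemma pitt (g : 𝓢(ℝ, ℂ)) {s : ℝ} (hs : 0 < s) (hs1 : s < 1) :
    ∫⁻ ξ, ENNReal.ofReal (|ξ| ^ (-s) * ‖𝓕 g ξ‖ ^ 2)
    ≤ ENNReal.ofReal (pittD s) * ∫⁻ x, ENNReal.ofReal (|x| ^ s * ‖g x‖ ^ 2) := by
  have hpi := Real.pi_pos
  have hgm : Measurable (fun x => ‖g x‖) := g.continuous.norm.measurable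
  have hFm : Measurable (fun x => ‖𝓕 g x‖) := (𝓕 g).continuous.norm.measurable
  have hq : 0 < (1 - s) / 4 := by linarith
  have hk : 0 < (1 + s) / 4 := by linarith
  have hΓq := Real.Gamma_pos_of_pos hq
  have hΓk := Real.Gamma_pos_of_pos hk
  have hΓs : 0 < Real.Gamma (s / 2) := by positivity
  set c : ℝ := Real.Gamma (s / 2) * Real.pi ^ (-(s / 2)) with hc
  have hcp : 0 < c := by positivity
  set G : ℝ → ℝ → ℝ → ENNReal := fun l x y =>
    ENNReal.ofReal (l ^ (-(1/2) : ℝ) * Real.exp (-(Real.pi * (x - y) ^ 2 / l))) with hG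
  have hGm : Measurable (fun z : ℝ × ℝ × ℝ => G z.1 z.2.1 z.2.2) := by
    rw [hG]; fun_prop
  have hGm1 : ∀ l, Measurable (fun z : ℝ × ℝ => G l z.1 z.2) := by
    intro l; rw [hG]; fun_prop
  have A : ENNReal.ofReal c * ∫⁻ ξ, ENNReal.ofReal (|ξ| ^ (-s) * ‖𝓕 g ξ‖ ^ 2)
      = ∫⁻ l in Ioi (0:ℝ), ENNReal.ofReal (l ^ (s / 2 - 1)) *
        ∫⁻ ξ, ENNReal.ofReal (Real.exp (-((Real.pi * ξ ^ 2) * l)) * ‖𝓕 g ξ‖ ^ 2) := by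
    calc _ = ∫⁻ ξ, ∫⁻ l in Ioi (0:ℝ), ENNReal.ofReal (l ^ (s / 2 - 1) * Real.exp (-((Real.pi * ξ ^ 2) * l))) *
          ENNReal.ofReal (‖𝓕 g ξ‖ ^ 2) := by
          rw [← lintegral_const_mul' _ _ (by finiteness)]
          refine lintegral_congr_ae ?_
          filter_upwards [ae_ne_zero'] with ξ hξ
          rw [lintegral_mul_const' _ _ (by finiteness), lint_gamma (by positivity) (by positivity),
            ← ENNReal.ofReal_mul (by positivity), ← ENNReal.ofReal_mul (by positivity)]
          congr 1
          rw [Real.mul_rpow hpi.le (by positivity), ← sq_abs ξ, ← Real.rpow_natCast |ξ| 2,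
            ← Real.rpow_mul (abs_nonneg ξ), hc, show ((2:ℕ):ℝ) * -(s / 2) = -s by push_cast; ring]
          ring
      _ = ∫⁻ l in Ioi (0:ℝ), ∫⁻ ξ, ENNReal.ofReal (l ^ (s / 2 - 1) * Real.exp (-((Real.pi * ξ ^ 2) * l))) *
          ENNReal.ofReal (‖𝓕 g ξ‖ ^ 2) := by
          apply lintegral_lintegral_swap
          apply Measurable.aemeasurable
          unfold Function.uncurry
          fun_prop
      _ = _ := by
          refine setLIntegral_congr_fun measurableSet_Ioi fun l hl => ?_
          have hl' : (0:ℝ) < l := hl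
          rw [← lintegral_const_mul' _ _ (by finiteness)]
          refine lintegral_congr fun ξ => ?_
          rw [← ENNReal.ofReal_mul (by positivity), ← ENNReal.ofReal_mul (by positivity), mul_assoc]
  have B : ENNReal.ofReal c * ∫⁻ ξ, ENNReal.ofReal (|ξ| ^ (-s) * ‖𝓕 g ξ‖ ^ 2)
      ≤ ∫⁻ l in Ioi (0:ℝ), ENNReal.ofReal (l ^ (s / 2 - 1)) *
        ∫⁻ x, ∫⁻ y, ENNReal.ofReal (‖g x‖ ^ 2 * |x| ^ ((1 + s) / 2)) *
        (ENNReal.ofReal (|y| ^ (-(1 + s) / 2)) * G l x y) := by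
    rw [A]
    refine setLIntegral_mono' measurableSet_Ioi fun l hl => ?_
    refine mul_le_mul' le_rfl ?_
    refine (gauss_fourier g hl).trans (schur_l g s (G l) (hGm1 l) ?_)
    intro x y
    rw [hG]
    simp only
    rw [show (x - y) ^ 2 = (y - x) ^ 2 by ring]
  have C : (∫⁻ l in Ioi (0:ℝ), ENNReal.ofReal (l ^ (s / 2 - 1)) *
        ∫⁻ x, ∫⁻ y, ENNReal.ofReal (‖g x‖ ^ 2 * |x| ^ ((1 + s) / 2)) *
        (ENNReal.ofReal (|y| ^ (-(1 + s) / 2)) * G l x y))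
      = ENNReal.ofReal (c * pittD s) * ∫⁻ x, ENNReal.ofReal (|x| ^ s * ‖g x‖ ^ 2) := by
    calc _ = ∫⁻ l in Ioi (0:ℝ), ∫⁻ x, ENNReal.ofReal (‖g x‖ ^ 2 * |x| ^ ((1 + s) / 2)) *
            ∫⁻ y, ENNReal.ofReal (l ^ (s / 2 - 1)) * (ENNReal.ofReal (|y| ^ (-(1 + s) / 2)) * G l x y) := by
          refine lintegral_congr fun l => ?_
          rw [← lintegral_const_mul' _ _ (by finiteness)]
          refine lintegral_congr fun x => ?_
          rw [lintegral_const_mul' _ _ (by finiteness), lintegral_const_mul' _ _ (by finiteness)]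
          ring
      _ = ∫⁻ x, ∫⁻ l in Ioi (0:ℝ), ENNReal.ofReal (‖g x‖ ^ 2 * |x| ^ ((1 + s) / 2)) *
            ∫⁻ y, ENNReal.ofReal (l ^ (s / 2 - 1)) * (ENNReal.ofReal (|y| ^ (-(1 + s) / 2)) * G l x y) := by
          apply lintegral_lintegral_swap
          apply Measurable.aemeasurable
          apply Measurable.mul
          · fun_prop
          · apply Measurable.lintegral_prod_right' (f := fun z : (ℝ × ℝ) × ℝ =>
              ENNReal.ofReal (z.1.1 ^ (s / 2 - 1)) * (ENNReal.ofReal (|z.2| ^ (-(1 + s) / 2)) * G z.1.1 z.1.2 z.2))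
            have : Measurable (fun z : (ℝ × ℝ) × ℝ => G z.1.1 z.1.2 z.2) :=
              hGm.comp (f := fun z : (ℝ × ℝ) × ℝ => (z.1.1, z.1.2, z.2)) (by fun_prop)
            fun_prop
      _ = _ := by
          rw [← lintegral_const_mul' _ _ (by finiteness)]
          refine lintegral_congr_ae ?_
          filter_upwards [ae_ne_zero'] with x hx
          have hx' := abs_pos.2 hx
          rw [lintegral_const_mul' _ _ (by finiteness), riesz_eval hs hs1 hx,
            ← ENNReal.ofReal_mul (by positivity), ← ENNReal.ofReal_mul (by unfold pittD; positivity)]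
          congr 1
          rw [hc]
          unfold pittD
          have e1 : |x| ^ s = |x| ^ ((1 + s) / 2) * |x| ^ ((s - 1) / 2) := by
            rw [← Real.rpow_add hx']; congr 1; ring
          have e2 : Real.pi ^ (-(s / 2)) * Real.pi ^ s = Real.pi ^ (s / 2) := by
            rw [← Real.rpow_add hpi]; congr 1; ring
          rw [e1, ← e2]
          ring
  rw [C, ENNReal.ofReal_mul hcp.le, mul_assoc] at B
  exact (ENNReal.mul_le_mul_iff_right (by simpa using hcp) (by simp)).1 B


lemma logw_integrable : Integrable (fun x : ℝ => |Real.log (|x|)| / (1 + x ^ 2)) := by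
  have h1 : Integrable (fun x : ℝ => (Icc (-1:ℝ) 1).indicator (fun x => |Real.log (|x|)|) x) := by
    rw [integrable_indicator_iff measurableSet_Icc]
    have : IntervalIntegrable Real.log volume (-1) 1 := intervalIntegral.intervalIntegrable_log'
    rw [intervalIntegrable_iff_integrableOn_Icc_of_le (by norm_num)] at this
    simp_rw [Real.log_abs]
    exact this.abs
  have h2 : Integrable (fun x : ℝ => 2 * (1 + ‖x‖ ^ 2) ^ (-(3/2 : ℝ) / 2)) :=
    (integrable_rpow_neg_one_add_norm_sq (by norm_num)).const_mul 2
  refine (h1.add h2).mono' ?_ ?_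
  · apply Measurable.aestronglyMeasurable
    have := Real.measurable_log
    fun_prop
  · refine Filter.Eventually.of_forall fun x => ?_
    rw [Real.norm_of_nonneg (by positivity)]
    simp only [Pi.add_apply, Real.norm_eq_abs, sq_abs]
    have hpos : (0:ℝ) < 1 + x ^ 2 := by positivity
    by_cases hx : x ∈ Icc (-1:ℝ) 1
    · rw [indicator_of_mem hx]
      have h3 : |Real.log (|x|)| / (1 + x ^ 2) ≤ |Real.log (|x|)| :=
        div_le_self (abs_nonneg _) (by nlinarith [sq_nonneg x])
      have : 0 ≤ 2 * (1 + x ^ 2) ^ (-(3/2 : ℝ) / 2) := by positivity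
      linarith
    · rw [indicator_of_notMem hx, zero_add]
      have hx1 : 1 ≤ |x| := by
        by_contra h
        push Not at h
        exact hx (abs_le.1 h.le)
      have hl : 0 ≤ Real.log |x| := Real.log_nonneg hx1
      rw [abs_of_nonneg hl, div_le_iff₀ hpos, mul_assoc]
      have h4 : Real.log |x| ≤ |x| ^ (1/2 : ℝ) / (1/2) := Real.log_le_rpow_div (abs_nonneg x) (by norm_num)
      have h5 : (1 + x ^ 2) ^ (-(3/2 : ℝ) / 2) * (1 + x ^ 2) = (1 + x ^ 2) ^ (1/4 : ℝ) := by
        nth_rewrite 2 [← Real.rpow_one (1 + x ^ 2)]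
        rw [← Real.rpow_add hpos]; norm_num
      have h6 : |x| ^ (1/2 : ℝ) ≤ (1 + x ^ 2) ^ (1/4 : ℝ) := by
        have : |x| ^ (1/2 : ℝ) = (x ^ 2) ^ (1/4 : ℝ) := by
          rw [← sq_abs, ← Real.rpow_natCast |x| 2, ← Real.rpow_mul (abs_nonneg x)]; norm_num
        rw [this]
        exact Real.rpow_le_rpow (by positivity) (by linarith) (by norm_num)
      rw [h5]
      linarith

lemma log_mul_bound {F : ℝ → ℝ} {M : ℝ} (hF : ∀ x, |F x| ≤ M / (1 + x ^ 2)) (x : ℝ) :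
    ‖Real.log |x| * F x‖ ≤ M * (|Real.log (|x|)| / (1 + x ^ 2)) := by
  rw [norm_mul, Real.norm_eq_abs, Real.norm_eq_abs]
  calc _ ≤ |Real.log (|x|)| * (M / (1 + x ^ 2)) := by gcongr; exact hF x
    _ = _ := by ring

lemma log_mul_integrable {F : ℝ → ℝ} (hm : Measurable F) {M : ℝ}
    (hF : ∀ x, |F x| ≤ M / (1 + x ^ 2)) : Integrable (fun x => Real.log |x| * F x) := by
  refine (logw_integrable.const_mul M).mono' ?_ (Filter.Eventually.of_forall (log_mul_bound hF))
  apply Measurable.aestronglyMeasurable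
  have := Real.measurable_log
  fun_prop

lemma schwartz_decay (g : 𝓢(ℝ, ℂ)) : ∃ C : ℝ, 0 ≤ C ∧ ∀ x, (1 + x ^ 2) * ‖g x‖ ≤ C := by
  obtain ⟨C0, h0, hC0⟩ := g.decay 0 0
  obtain ⟨C2, h2, hC2⟩ := g.decay 2 0
  refine ⟨C0 + C2, by positivity, fun x => ?_⟩
  have a := hC0 x
  have b := hC2 x
  simp at a b
  nlinarith

lemma schwartz_sq_decay (g : 𝓢(ℝ, ℂ)) : ∃ C : ℝ, 0 ≤ C ∧ ∀ x, ‖g x‖ ^ 2 * (1 + x ^ 2) ≤ C / (1 + x ^ 2) := by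
  obtain ⟨C, h0, hC⟩ := schwartz_decay g
  refine ⟨C ^ 2, by positivity, fun x => ?_⟩
  rw [le_div_iff₀ (by positivity)]
  have := pow_le_pow_left₀ (by positivity) (hC x) 2
  calc _ = ((1 + x ^ 2) * ‖g x‖) ^ 2 := by ring
    _ ≤ _ := this

lemma schwartz_sq_decay' (g : 𝓢(ℝ, ℂ)) : ∃ C : ℝ, 0 ≤ C ∧ ∀ x, ‖g x‖ ^ 2 ≤ C / (1 + x ^ 2) := by
  obtain ⟨C, h0, hC⟩ := schwartz_sq_decay g
  refine ⟨C, h0, fun x => le_trans ?_ (hC x)⟩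
  apply le_mul_of_one_le_right (by positivity)
  nlinarith [sq_nonneg x]

lemma schwartz_log_integrable (g : 𝓢(ℝ, ℂ)) : Integrable (fun x => Real.log |x| * ‖g x‖ ^ 2) := by
  obtain ⟨C, h0, hC⟩ := schwartz_sq_decay' g
  refine log_mul_integrable (M := C) (by have := g.continuous.measurable; fun_prop) fun x => ?_
  rw [abs_of_nonneg (by positivity)]
  exact hC x

lemma schwartz_sq_integrable (g : 𝓢(ℝ, ℂ)) : Integrable (fun x => ‖g x‖ ^ 2) :=
  (g.memLp 2).integrable_norm_pow (by norm_num)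

lemma pittD_zero : pittD 0 = 1 := by
  unfold pittD
  have : Real.Gamma (1 / 4) ≠ 0 := (Real.Gamma_pos_of_pos (by norm_num)).ne'
  rw [sub_zero, add_zero, div_self this]
  simp

lemma pittD_deriv : HasDerivAt pittD
    (Real.log Real.pi - deriv Real.Gamma (1 / 4) / Real.Gamma (1 / 4)) 0 := by
  have hΓ : Real.Gamma (1 / 4) ≠ 0 := (Real.Gamma_pos_of_pos (by norm_num)).ne'
  have hd : HasDerivAt Real.Gamma (deriv Real.Gamma (1/4)) (1/4) := by
    apply DifferentiableAt.hasDerivAt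
    apply Real.differentiableAt_Gamma
    intro m h
    have : (0:ℝ) ≤ m := by positivity
    linarith
  have h1 : HasDerivAt (fun s : ℝ => Real.Gamma ((1 - s) / 4)) (deriv Real.Gamma (1/4) * (-1/4)) 0 := by
    have hi : HasDerivAt (fun s : ℝ => (1 - s) / 4) (-1/4) 0 := by
      simpa using ((hasDerivAt_id (0:ℝ)).const_sub 1).div_const 4
    exact HasDerivAt.comp (h₂ := Real.Gamma) (0:ℝ) (by simpa using hd) hi
  have h2 : HasDerivAt (fun s : ℝ => Real.Gamma ((1 + s) / 4)) (deriv Real.Gamma (1/4) * (1/4)) 0 := by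
    have hi : HasDerivAt (fun s : ℝ => (1 + s) / 4) (1/4) 0 := by
      simpa using ((hasDerivAt_id (0:ℝ)).const_add 1).div_const 4
    exact HasDerivAt.comp (h₂ := Real.Gamma) (0:ℝ) (by simpa using hd) hi
  have h3 : HasDerivAt (fun s : ℝ => Real.pi ^ s) (Real.log Real.pi) 0 := by
    simpa using (Real.hasStrictDerivAt_const_rpow Real.pi_pos 0).hasDerivAt
  have h4 := h3.mul ((h1.div h2 (by simpa using hΓ)).pow 2)
  refine h4.congr_deriv ?_
  simp only [Pi.div_apply, Pi.pow_apply, sub_zero, add_zero, Real.rpow_zero]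
  field_simp
  ring

lemma log_uncertainty_s (g : 𝓢(ℝ, ℂ)) {s : ℝ} (hs : 0 < s) (hs1 : s < 1) :
    -∫ ξ, Real.log |ξ| * ‖𝓕 g ξ‖ ^ 2 ≤
      (s⁻¹ * (pittD (0 + s) - pittD 0)) * (∫ x, ‖g x‖ ^ 2)
        + pittD s * ∫ x, Real.log |x| * (|x| ^ s * ‖g x‖ ^ 2) := by
  have hD : 0 ≤ pittD s := by
    unfold pittD
    have := Real.pi_pos
    positivity
  have hgm : Measurable (fun x => ‖g x‖) := g.continuous.norm.measurable
  have hFm : Measurable (fun x => ‖𝓕 g x‖) := (𝓕 g).continuous.norm.measurable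
  have hP := pitt g hs hs1
  obtain ⟨C, hC0, hC⟩ := schwartz_sq_decay g
  have hb : ∀ x, |x| ^ s * ‖g x‖ ^ 2 ≤ C / (1 + x ^ 2) := by
    intro x
    refine le_trans ?_ (hC x)
    rw [mul_comm]
    gcongr
    rcases le_total |x| 1 with h | h
    · have := Real.rpow_le_one (abs_nonneg x) h hs.le
      nlinarith [sq_nonneg x]
    · calc |x| ^ s ≤ |x| ^ (2:ℝ) := Real.rpow_le_rpow_of_exponent_le h (by linarith)
        _ ≤ _ := by
          rw [Real.rpow_two, sq_abs]; linarith
  have i1 : Integrable (fun x => |x| ^ s * ‖g x‖ ^ 2) := by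
    refine (integrable_inv_one_add_sq.const_mul C).mono' (by fun_prop) ?_
    refine Filter.Eventually.of_forall fun x => ?_
    rw [Real.norm_of_nonneg (by positivity)]
    exact hb x
  have i2 : Integrable (fun x => Real.log |x| * (|x| ^ s * ‖g x‖ ^ 2)) := by
    refine log_mul_integrable (M := C) (by fun_prop) fun x => ?_
    rw [abs_of_nonneg (by positivity)]
    exact hb x
  rw [← ofReal_integral_eq_lintegral_ofReal i1 (Filter.Eventually.of_forall fun x => by positivity),
    ← ENNReal.ofReal_mul hD] at hP
  have i3 : Integrable (fun ξ => |ξ| ^ (-s) * ‖𝓕 g ξ‖ ^ 2) := by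
    refine ⟨by fun_prop, ?_⟩
    rw [hasFiniteIntegral_iff_ofReal (Filter.Eventually.of_forall fun x => by positivity)]
    exact lt_of_le_of_lt hP (by finiteness)
  rw [← ofReal_integral_eq_lintegral_ofReal i3 (Filter.Eventually.of_forall fun x => by positivity),
    ENNReal.ofReal_le_ofReal_iff (mul_nonneg hD (integral_nonneg fun x => by positivity))] at hP
  have i4 := schwartz_log_integrable (𝓕 g)
  have i5 := schwartz_sq_integrable (𝓕 g)
  have i6 := schwartz_sq_integrable g
  have low : (∫ x, ‖g x‖ ^ 2) - s * ∫ ξ, Real.log |ξ| * ‖𝓕 g ξ‖ ^ 2 ≤ ∫ ξ, |ξ| ^ (-s) * ‖𝓕 g ξ‖ ^ 2 := by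
    rw [← SchwartzMap.integral_norm_sq_fourier g, ← integral_const_mul, ← integral_sub i5 (i4.const_mul s)]
    refine integral_mono_ae (i5.sub (i4.const_mul s)) i3 ?_
    filter_upwards [ae_ne_zero'] with ξ hξ
    have := abs_pos.2 hξ
    rw [Real.rpow_def_of_pos this]
    have := Real.add_one_le_exp (Real.log |ξ| * -s)
    nlinarith [sq_nonneg ‖𝓕 g ξ‖]
  have high : (∫ x, |x| ^ s * ‖g x‖ ^ 2) ≤ (∫ x, ‖g x‖ ^ 2) + s * ∫ x, Real.log |x| * (|x| ^ s * ‖g x‖ ^ 2) := by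
    rw [← integral_const_mul, ← integral_add i6 (i2.const_mul s)]
    refine integral_mono_ae i1 (i6.add (i2.const_mul s)) ?_
    filter_upwards [ae_ne_zero'] with x hx
    have := abs_pos.2 hx
    rw [Real.rpow_def_of_pos this]
    have h1 := Real.add_one_le_exp (-(Real.log |x| * s))
    have h2 : Real.exp (-(Real.log |x| * s)) * Real.exp (Real.log |x| * s) = 1 := by
      rw [← Real.exp_add]; simp
    have h3 := Real.exp_pos (Real.log |x| * s)
    have h4 : Real.exp (Real.log |x| * s) ≤ 1 + s * (Real.log |x| * Real.exp (Real.log |x| * s)) := by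
      nlinarith
    nlinarith [mul_le_mul_of_nonneg_right h4 (sq_nonneg ‖g x‖)]
  have tot := low.trans (hP.trans (mul_le_mul_of_nonneg_left high hD))
  rw [zero_add, pittD_zero]
  set N := ∫ x, ‖g x‖ ^ 2
  set J := ∫ x, Real.log |x| * (|x| ^ s * ‖g x‖ ^ 2)
  set L := ∫ ξ, Real.log |ξ| * ‖𝓕 g ξ‖ ^ 2
  rw [show s⁻¹ * (pittD s - 1) * N + pittD s * J = ((pittD s - 1) * N + s * pittD s * J) / s by
    field_simp, le_div_iff₀ hs]
  linarith

lemma log_uncertainty (g : 𝓢(ℝ, ℂ)) :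
    (deriv Real.Gamma (1 / 4) / Real.Gamma (1 / 4) - Real.log Real.pi) * (∫ x, ‖g x‖ ^ 2)
      ≤ (∫ x, Real.log |x| * ‖g x‖ ^ 2) + ∫ ξ, Real.log |ξ| * ‖𝓕 g ξ‖ ^ 2 := by
  have hgm : Measurable (fun x => ‖g x‖) := g.continuous.norm.measurable
  obtain ⟨C, hC0, hC⟩ := schwartz_sq_decay g
  have hmem : Ioo (0:ℝ) 1 ∈ nhdsWithin (0:ℝ) (Ioi 0) := Ioo_mem_nhdsGT one_pos
  have t1 := pittD_deriv.tendsto_slope_zero_right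
  have t2 : Filter.Tendsto pittD (nhdsWithin 0 (Ioi 0)) (nhds 1) := by
    have := pittD_deriv.continuousAt.tendsto
    rw [pittD_zero] at this
    exact this.mono_left nhdsWithin_le_nhds
  have t3 : Filter.Tendsto (fun s : ℝ => ∫ x, Real.log |x| * (|x| ^ s * ‖g x‖ ^ 2))
      (nhdsWithin 0 (Ioi 0)) (nhds (∫ x, Real.log |x| * ‖g x‖ ^ 2)) := by
    refine tendsto_integral_filter_of_dominated_convergence
      (fun x => C * (|Real.log (|x|)| / (1 + x ^ 2))) ?_ ?_ (logw_integrable.const_mul C) ?_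
    · refine Filter.Eventually.of_forall fun s => Measurable.aestronglyMeasurable ?_
      have := Real.measurable_log
      fun_prop
    · filter_upwards [hmem] with s hs
      refine Filter.Eventually.of_forall fun x => log_mul_bound (F := fun x => |x| ^ s * ‖g x‖ ^ 2) ?_ x
      intro x
      rw [abs_of_nonneg (by positivity)]
      refine le_trans ?_ (hC x)
      rw [mul_comm]
      gcongr
      rcases le_total |x| 1 with h | h
      · have := Real.rpow_le_one (abs_nonneg x) h hs.1.le
        nlinarith [sq_nonneg x]
      · calc |x| ^ s ≤ |x| ^ (2:ℝ) := Real.rpow_le_rpow_of_exponent_le h (by linarith [hs.2])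
          _ ≤ _ := by
            rw [Real.rpow_two, sq_abs]; linarith
    · filter_upwards [ae_ne_zero'] with x hx
      have hx' := abs_pos.2 hx
      have hc : Continuous (fun s : ℝ => Real.log |x| * (|x| ^ s * ‖g x‖ ^ 2)) := by
        have := Real.continuous_const_rpow hx'.ne'
        fun_prop
      have := (hc.tendsto 0).mono_left (nhdsWithin_le_nhds (s := Ioi 0))
      simpa using this
  have key := ge_of_tendsto ((t1.mul_const (∫ x, ‖g x‖ ^ 2)).add (t2.mul t3))
    (b := -∫ ξ, Real.log |ξ| * ‖𝓕 g ξ‖ ^ 2) (by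
      filter_upwards [hmem] with s hs
      exact log_uncertainty_s g hs.1 hs.2)
  linarith


lemma expI_temperate : Function.HasTemperateGrowth (fun t : ℝ => Complex.exp (Complex.I * (t : ℂ))) := by
  have hd : ∀ n : ℕ, iteratedDeriv n (fun t : ℝ => Complex.exp (Complex.I * (t : ℂ)))
      = fun t : ℝ => Complex.I ^ n * Complex.exp (Complex.I * (t : ℂ)) := by
    intro n
    induction n with
    | zero => simp
    | succ n ih =>
      rw [iteratedDeriv_succ, ih]
      funext t
      have h1 : HasDerivAt (fun t : ℝ => Complex.I * (t : ℂ)) (Complex.I * 1) t :=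
        (Complex.ofRealCLM.hasDerivAt (x := t)).const_mul Complex.I
      have h2 := (h1.cexp).const_mul (Complex.I ^ n)
      rw [h2.deriv]
      ring
  refine ⟨(contDiff_const.mul Complex.ofRealCLM.contDiff).cexp, fun n => ⟨0, 1, fun t => ?_⟩⟩
  rw [norm_iteratedFDeriv_eq_norm_iteratedDeriv, hd]
  rw [norm_mul, norm_pow, Complex.norm_I, mul_comm Complex.I, Complex.norm_exp_ofReal_mul_I]
  simp

lemma phase_temperate (a d : ℝ) : Function.HasTemperateGrowth
    (fun t : ℝ => Complex.exp (Complex.I * ((2 * a * t ^ 2 + 2 * d * t : ℝ) : ℂ))) := by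
  have h : Function.HasTemperateGrowth (fun t : ℝ => 2 * a * (t * t) + 2 * d * t) := by fun_prop
  have := expI_temperate.comp h
  simpa [Function.comp_def, sq] using this

lemma exists_phase (a d : ℝ) (f : 𝓢(ℝ, ℂ)) : ∃ F : 𝓢(ℝ, ℂ), ∀ t : ℝ, F t =
    Complex.exp (Complex.I * ((2 * a * t ^ 2 + 2 * d * t : ℝ) : ℂ)) * f t := by
  refine ⟨SchwartzMap.smulLeftCLM ℂ
    (fun t : ℝ => Complex.exp (Complex.I * ((2 * a * t ^ 2 + 2 * d * t : ℝ) : ℂ))) f, fun t => ?_⟩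
  rw [SchwartzMap.smulLeftCLM_apply_apply (phase_temperate a d), smul_eq_mul]

lemma exists_dil (ψ : 𝓢(ℝ, ℂ)) {α : ℝ} (hα : 0 < α) : ∃ v : 𝓢(ℝ, ℂ), ∀ t : ℝ, v t =
    (starRingEnd ℂ) (dil ψ α t) := by
  let g : ℝ ≃L[ℝ] ℝ := ContinuousLinearEquiv.unitsEquivAut ℝ (Units.mk0 α⁻¹ (inv_ne_zero hα.ne'))
  let w : 𝓢(ℝ, ℂ) := SchwartzMap.compCLMOfContinuousLinearEquiv ℝ g ψ
  let w2 : 𝓢(ℝ, ℂ) := SchwartzMap.postcompCLM (Complex.conjCLE : ℂ →L[ℝ] ℂ) w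
  refine ⟨((α ^ (-(1 / 2 : ℝ)) : ℝ)) • w2, fun t => ?_⟩
  have : w2 t = (starRingEnd ℂ) (ψ (t / α)) := by
    simp [w2, w, g, SchwartzMap.postcompCLM_apply, div_eq_mul_inv]
  rw [_root_.smul_apply, this]
  simp [dil]

noncomputable def gB (F v : 𝓢(ℝ, ℂ)) (β : ℝ) : 𝓢(ℝ, ℂ) :=
  SchwartzMap.pairing (ContinuousLinearMap.mul ℂ ℂ) F (SchwartzMap.compSubConstCLM ℂ β v)

lemma gB_apply (F v : 𝓢(ℝ, ℂ)) (β t : ℝ) : gB F v β t = F t * v (t - β) := by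
  simp [gB, SchwartzMap.pairing_apply_apply]

lemma fourier_decay (g : 𝓢(ℝ, ℂ)) (ξ : ℝ) :
    ‖𝓕 g ξ‖ ^ 2 ≤ ((∫ t, ‖g t‖) ^ 2 + (∫ t, ‖deriv g t‖) ^ 2) / (1 + ξ ^ 2) := by
  rw [le_div_iff₀ (by positivity)]
  have hd : ∀ t, deriv g t = SchwartzMap.derivCLM ℂ ℂ g t := fun t => by
    simp [SchwartzMap.derivCLM_apply]
  have hdi : Integrable (deriv g) := by
    have : deriv g = ⇑(SchwartzMap.derivCLM ℂ ℂ g) := funext hd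
    rw [this]
    exact SchwartzMap.integrable _
  have h1 : ‖𝓕 g ξ‖ ≤ ∫ t, ‖g t‖ := by
    rw [SchwartzMap.fourier_coe, Real.fourier_eq]
    exact (norm_integral_le_integral_norm _).trans_eq (by simp)
  have h2 : ‖𝓕 (deriv g) ξ‖ ≤ ∫ t, ‖deriv g t‖ := by
    rw [Real.fourier_eq]
    exact (norm_integral_le_integral_norm _).trans_eq (by simp)
  have h3 := congrFun (Real.fourier_deriv g.integrable g.differentiable hdi) ξ
  rw [h3, norm_smul, ← SchwartzMap.fourier_coe] at h2
  have h4 : |ξ| ≤ ‖(2 * Real.pi * Complex.I * ξ : ℂ)‖ := by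
    simp only [norm_mul, Complex.norm_real, Complex.norm_I, Complex.norm_ofNat, mul_one, Real.norm_eq_abs]
    rw [abs_of_pos Real.pi_pos]
    nlinarith [Real.pi_gt_three, abs_nonneg ξ]
  have h5 : |ξ| * ‖𝓕 g ξ‖ ≤ ∫ t, ‖deriv g t‖ := le_trans (by gcongr) h2
  have h6 := pow_le_pow_left₀ (by positivity) h1 2
  have h7 := pow_le_pow_left₀ (by positivity) h5 2
  rw [mul_pow, sq_abs] at h7
  linarith

lemma conv_prod {p q : ℝ → ℝ} (hpm : Measurable p) (hqm : Measurable q) (hp : Integrable p)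
    (hq : Integrable q) : Integrable (fun z : ℝ × ℝ => p z.1 * q (z.1 - z.2)) := by
  rw [Measure.volume_eq_prod, integrable_prod_iff (Measurable.aestronglyMeasurable (by fun_prop))]
  refine ⟨Filter.Eventually.of_forall fun t => (hq.comp_sub_left t).const_mul (p t), ?_⟩
  have : (fun t => ∫ β, ‖p t * q (t - β)‖) = fun t => ‖p t‖ * ∫ x, ‖q x‖ := by
    funext t
    simp_rw [norm_mul]
    rw [integral_const_mul, integral_sub_left_eq_self (fun x => ‖q x‖)]
  simp only [this]
  exact hp.norm.mul_const _

lemma conv_int {p q : ℝ → ℝ} (hpm : Measurable p) (hqm : Measurable q) (hp : Integrable p)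
    (hq : Integrable q) : Integrable (fun β => ∫ t, p t * q (t - β)) ∧
    ∫ β, ∫ t, p t * q (t - β) = (∫ t, p t) * ∫ t, q t := by
  have h := conv_prod hpm hqm hp hq
  rw [Measure.volume_eq_prod] at h
  refine ⟨h.integral_prod_right, ?_⟩
  rw [integral_integral_swap (f := fun β t => p t * q (t - β)) h.swap]
  have : (fun t => ∫ β, p t * q (t - β)) = fun t => p t * ∫ x, q x := by
    funext t
    rw [integral_const_mul, integral_sub_left_eq_self (fun x => q x)]
  rw [this, integral_mul_const]



lemma gB_norm_integral (F v : 𝓢(ℝ, ℂ)) (β : ℝ) :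
    ∫ t, ‖gB F v β t‖ = ∫ t, ‖F t‖ * ‖v (t - β)‖ := by
  simp_rw [gB_apply, norm_mul]

lemma conv_bound (F v : 𝓢(ℝ, ℂ)) : ∃ M : ℝ, ∀ β, ∫ t, ‖F t‖ * ‖v (t - β)‖ ≤ M := by
  obtain ⟨C, h0, hC⟩ := v.decay 0 0
  refine ⟨(∫ t, ‖F t‖) * C, fun β => ?_⟩
  rw [← integral_mul_const]
  refine integral_mono_of_nonneg (Filter.Eventually.of_forall fun t => by positivity)
    (F.integrable.norm.mul_const C) (Filter.Eventually.of_forall fun t => ?_)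
  have := hC (t - β)
  simp at this
  simp only
  gcongr

lemma conv_integrable (F v : 𝓢(ℝ, ℂ)) : Integrable (fun β => ∫ t, ‖F t‖ * ‖v (t - β)‖) :=
  (conv_int F.continuous.norm.measurable v.continuous.norm.measurable F.integrable.norm
    v.integrable.norm).1

lemma gB_deriv_norm_integral (F v : 𝓢(ℝ, ℂ)) (β : ℝ) :
    ∫ t, ‖deriv (gB F v β) t‖ ≤ (∫ t, ‖SchwartzMap.derivCLM ℂ ℂ F t‖ * ‖v (t - β)‖)
      + ∫ t, ‖F t‖ * ‖SchwartzMap.derivCLM ℂ ℂ v (t - β)‖ := by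
  have hi : ∀ F v : 𝓢(ℝ, ℂ), Integrable (fun t => ‖F t‖ * ‖v (t - β)‖) := by
    intro F v
    have := (gB F v β).integrable.norm (μ := volume)
    simpa [gB_apply] using this
  rw [← integral_add (hi _ _) (hi _ _)]
  refine integral_mono_of_nonneg (Filter.Eventually.of_forall fun t => by positivity)
    ((hi _ _).add (hi _ _)) (Filter.Eventually.of_forall fun t => ?_)
  have h1 : HasDerivAt F (deriv F t) t := F.differentiableAt.hasDerivAt
  have h2 : HasDerivAt (fun t => v (t - β)) (deriv v (t - β)) t :=
    (v.differentiableAt (x := t - β)).hasDerivAt.comp_sub_const t β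
  have h3 : ⇑(gB F v β) = fun t => F t * v (t - β) := funext (gB_apply F v β)
  have h4 : deriv (gB F v β) t = deriv F t * v (t - β) + F t * deriv v (t - β) := by
    rw [h3]; exact (h1.mul h2).deriv
  simp only [h4, SchwartzMap.derivCLM_apply]
  refine (norm_add_le _ _).trans_eq ?_
  rw [norm_mul, norm_mul]

lemma gB_log_meas (F v : 𝓢(ℝ, ℂ)) :
    StronglyMeasurable (fun β => ∫ η, Real.log |η| * ‖𝓕 (gB F v β) η‖ ^ 2) := by
  have hF : StronglyMeasurable (fun z : ℝ × ℝ => 𝓕 (gB F v z.1) z.2) := by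
    have h : (fun z : ℝ × ℝ => 𝓕 (gB F v z.1) z.2) = fun z : ℝ × ℝ =>
        ∫ t : ℝ, Complex.exp (((-2 * Real.pi * t * z.2 : ℝ) : ℂ) * Complex.I) • (F t * v (t - z.1)) := by
      funext z
      rw [SchwartzMap.fourier_coe, Real.fourier_real_eq_integral_exp_smul]
      simp_rw [gB_apply]
    rw [h]
    refine StronglyMeasurable.integral_prod_right (f := fun (z : ℝ × ℝ) (t : ℝ) =>
      Complex.exp (((-2 * Real.pi * t * z.2 : ℝ) : ℂ) * Complex.I) • (F t * v (t - z.1))) ?_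
    apply Continuous.stronglyMeasurable
    have := F.continuous
    have := v.continuous
    fun_prop
  refine StronglyMeasurable.integral_prod_right (f := fun (β : ℝ) (η : ℝ) =>
    Real.log |η| * ‖𝓕 (gB F v β) η‖ ^ 2) ?_
  have h1 : Measurable (fun z : ℝ × ℝ => Real.log |z.2|) := by
    have := Real.measurable_log
    fun_prop
  exact h1.stronglyMeasurable.mul (hF.norm.pow 2)

lemma gB_log_integrable (F v : 𝓢(ℝ, ℂ)) :
    Integrable (fun β => ∫ η, Real.log |η| * ‖𝓕 (gB F v β) η‖ ^ 2) := by
  set K := ∫ x : ℝ, |Real.log (|x|)| / (1 + x ^ 2) with hK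
  have hK0 : 0 ≤ K := integral_nonneg fun x => by positivity
  set DF := SchwartzMap.derivCLM ℂ ℂ F
  set Dv := SchwartzMap.derivCLM ℂ ℂ v
  obtain ⟨M1, h1⟩ := conv_bound F v
  obtain ⟨M2, h2⟩ := conv_bound DF v
  obtain ⟨M3, h3⟩ := conv_bound F Dv
  have i1 := conv_integrable F v
  have i2 := conv_integrable DF v
  have i3 := conv_integrable F Dv
  refine (((i1.const_mul M1).add ((i2.add i3).const_mul (M2 + M3))).mul_const K).mono'
    (gB_log_meas F v).aestronglyMeasurable (Filter.Eventually.of_forall fun β => ?_)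
  have hdec : ∀ x, |‖𝓕 (gB F v β) x‖ ^ 2| ≤ ((∫ t, ‖gB F v β t‖) ^ 2
      + (∫ t, ‖deriv (gB F v β) t‖) ^ 2) / (1 + x ^ 2) := fun x => by
    rw [abs_of_nonneg (by positivity)]
    exact fourier_decay (gB F v β) x
  have := norm_integral_le_of_norm_le (logw_integrable.const_mul _)
    (Filter.Eventually.of_forall (log_mul_bound (F := fun x => ‖𝓕 (gB F v β) x‖ ^ 2) hdec))
  refine this.trans ?_
  rw [integral_const_mul, ← hK]
  refine mul_le_mul_of_nonneg_right ?_ hK0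
  simp only [Pi.add_apply]
  have a1 : (∫ t, ‖gB F v β t‖) = _ := gB_norm_integral F v β
  have a2 := gB_deriv_norm_integral F v β
  have a3 : 0 ≤ ∫ t, ‖deriv (gB F v β) t‖ := integral_nonneg fun x => by positivity
  have n1 : 0 ≤ ∫ t, ‖F t‖ * ‖v (t - β)‖ := integral_nonneg fun x => by positivity
  have e1 := h1 β
  have e2 := h2 β
  have e3 := h3 β
  rw [a1]
  have := pow_le_pow_left₀ a3 a2 2
  nlinarith

lemma QPWPT_norm_sq (a b c d e : ℝ) (hb : 0 < b) (f ψ F v : 𝓢(ℝ, ℂ)) (α : ℝ)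
    (hF : ∀ t : ℝ, F t = Complex.exp (Complex.I * ((2 * a * t ^ 2 + 2 * d * t : ℝ) : ℂ)) * f t)
    (hv : ∀ t : ℝ, v t = (starRingEnd ℂ) (dil ψ α t)) (ξ β : ℝ) :
    ‖QPWPT a b c d e ψ f ξ β α‖ ^ 2
      = b / (2 * Real.pi) * ‖𝓕 (gB F v β) (ξ * (-(b / (2 * Real.pi))))‖ ^ 2 := by
  have hpi := Real.pi_pos
  have hc : ‖qpConst b‖ ^ 2 = b / (2 * Real.pi) := by
    unfold qpConst
    rw [norm_mul, show (-((Real.pi / 4 : ℝ) : ℂ) * Complex.I) = (((-(Real.pi / 4) : ℝ)) : ℂ) * Complex.I by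
      push_cast; ring, Complex.norm_exp_ofReal_mul_I, mul_one, Complex.norm_real, Real.norm_eq_abs, sq_abs,
      Real.sq_sqrt (by positivity)]
  unfold QPWPT
  rw [norm_mul, mul_pow, hc]
  congr 2
  have h : (∫ t : ℝ, Complex.exp (Complex.I * ((2 * a * t ^ 2 + b * t * ξ + c * ξ ^ 2 + 2 * d * t + e * ξ
      - a * β ^ 2 - d * β : ℝ) : ℂ)) * f t * (starRingEnd ℂ) (dil ψ α (t - β)))
      = Complex.exp (((c * ξ ^ 2 + e * ξ - a * β ^ 2 - d * β : ℝ) : ℂ) * Complex.I)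
        * 𝓕 (gB F v β) (ξ * (-(b / (2 * Real.pi)))) := by
    rw [SchwartzMap.fourier_coe, Real.fourier_real_eq_integral_exp_smul, ← integral_const_mul]
    congr 1
    funext t
    rw [gB_apply, hF, hv, smul_eq_mul]
    simp only [← mul_assoc]
    congr 2
    rw [← Complex.exp_add, ← Complex.exp_add]
    congr 1
    have : (-2 * Real.pi * t * ξ * (-(b / (2 * Real.pi))) : ℝ) = b * t * ξ := by
      field_simp
    rw [this]
    push_cast
    ring
  rw [h, norm_mul, Complex.norm_exp_ofReal_mul_I, one_mul]

lemma QPWPT_log (a b c d e : ℝ) (hb : 0 < b) (f ψ F v : 𝓢(ℝ, ℂ)) (α : ℝ)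
    (hF : ∀ t : ℝ, F t = Complex.exp (Complex.I * ((2 * a * t ^ 2 + 2 * d * t : ℝ) : ℂ)) * f t)
    (hv : ∀ t : ℝ, v t = (starRingEnd ℂ) (dil ψ α t)) (β : ℝ) :
    ∫ ξ, Real.log |ξ| * ‖QPWPT a b c d e ψ f ξ β α‖ ^ 2
      = (∫ η, Real.log |η| * ‖𝓕 (gB F v β) η‖ ^ 2)
        + (Real.log (2 * Real.pi) - Real.log b) * ∫ t, ‖gB F v β t‖ ^ 2 := by
  have hpi := Real.pi_pos
  set r := b / (2 * Real.pi) with hr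
  have hr0 : 0 < r := by positivity
  have hlr : Real.log r = Real.log b - Real.log (2 * Real.pi) := Real.log_div hb.ne' (by positivity)
  set H : ℝ → ℝ := fun η => Real.log |η| * ‖𝓕 (gB F v β) η‖ ^ 2 + (Real.log (2 * Real.pi) - Real.log b) *
    ‖𝓕 (gB F v β) η‖ ^ 2 with hH
  have h1 : ∫ ξ, Real.log |ξ| * ‖QPWPT a b c d e ψ f ξ β α‖ ^ 2 = ∫ ξ, r * H (ξ * (-r)) := by
    refine integral_congr_ae ?_
    filter_upwards [ae_ne_zero'] with ξ hξ
    rw [QPWPT_norm_sq a b c d e hb f ψ F v α hF hv]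
    simp only [hH, ← hr]
    rw [abs_mul, abs_neg, abs_of_pos hr0, Real.log_mul (abs_pos.2 hξ).ne' hr0.ne', hlr]
    ring
  rw [h1, integral_const_mul, Measure.integral_comp_mul_right]
  rw [inv_neg, abs_neg, abs_inv, abs_of_pos hr0, smul_eq_mul, mul_inv_cancel_left₀ hr0.ne']
  rw [hH, integral_add (schwartz_log_integrable _) ((schwartz_sq_integrable _).const_mul _),
    integral_const_mul, SchwartzMap.integral_norm_sq_fourier]

lemma dil_norm_integral (ψ v : 𝓢(ℝ, ℂ)) {α : ℝ} (hα : 0 < α)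
    (hv : ∀ t : ℝ, v t = (starRingEnd ℂ) (dil ψ α t)) :
    ∫ t, ‖v t‖ ^ 2 = ∫ t, ‖ψ t‖ ^ 2 := by
  have : ∀ t, ‖v t‖ ^ 2 = α⁻¹ * (fun t => ‖ψ t‖ ^ 2) (t / α) := by
    intro t
    rw [hv, RCLike.norm_conj, dil, norm_mul, mul_pow, Complex.norm_real, Real.norm_eq_abs, sq_abs,
      ← Real.rpow_natCast, ← Real.rpow_mul hα.le]
    norm_num [Real.rpow_neg_one]
  simp_rw [this]
  rw [integral_const_mul, Measure.integral_comp_div (fun t => ‖ψ t‖ ^ 2), abs_of_pos hα, smul_eq_mul,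
    inv_mul_cancel_left₀ hα.ne']

theorem qpwpt_logarithmic_uncertainty (a b c d e : ℝ) (hb : 0 < b)
    (f ψ : SchwartzMap ℝ ℂ) (α : ℝ) (hα : 0 < α) :
    (∫ t : ℝ, ‖ψ t‖ ^ 2) * (∫ t : ℝ, Real.log |t| * ‖f t‖ ^ 2)
      + (∫ β : ℝ, ∫ ξ : ℝ, Real.log |ξ| * ‖QPWPT a b c d e (⇑ψ) (⇑f) ξ β α‖ ^ 2)
      ≥ (deriv Real.Gamma (1 / 4) / Real.Gamma (1 / 4) - Real.log Real.pi - Real.log b) *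
        ((∫ t : ℝ, ‖f t‖ ^ 2) * ∫ t : ℝ, ‖ψ t‖ ^ 2) := by
  obtain ⟨F, hF⟩ := exists_phase a d f
  obtain ⟨v, hv⟩ := exists_dil ψ hα
  have hFn : ∀ t, ‖F t‖ = ‖f t‖ := fun t => by
    rw [hF, norm_mul, mul_comm Complex.I, Complex.norm_exp_ofReal_mul_I, one_mul]
  simp_rw [QPWPT_log a b c d e hb f ψ F v α hF hv]
  rw [← dil_norm_integral ψ v hα hv]
  simp_rw [← hFn]
  have hFm : Measurable (fun t => ‖F t‖ ^ 2) := (F.continuous.norm.pow 2).measurable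
  have hvm : Measurable (fun t => ‖v t‖ ^ 2) := (v.continuous.norm.pow 2).measurable
  have hlm : Measurable (fun t : ℝ => Real.log |t| * ‖F t‖ ^ 2) := by
    have := Real.measurable_log
    fun_prop
  obtain ⟨i1, e1⟩ := conv_int hFm hvm (schwartz_sq_integrable F) (schwartz_sq_integrable v)
  obtain ⟨i2, e2⟩ := conv_int hlm hvm (schwartz_log_integrable F) (schwartz_sq_integrable v)
  have i3 := gB_log_integrable F v
  have hn : ∀ β, ∫ t, ‖gB F v β t‖ ^ 2 = ∫ t, ‖F t‖ ^ 2 * ‖v (t - β)‖ ^ 2 := fun β => by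
    simp_rw [gB_apply, norm_mul, mul_pow]
  have hl : ∀ β, ∫ t, Real.log |t| * ‖gB F v β t‖ ^ 2
      = ∫ t, Real.log |t| * ‖F t‖ ^ 2 * ‖v (t - β)‖ ^ 2 := fun β => by
    simp_rw [gB_apply, norm_mul, mul_pow, mul_assoc]
  simp_rw [hn]
  rw [integral_add i3 (i1.const_mul _), integral_const_mul, e1]
  have key := integral_mono (i1.const_mul
    (deriv Real.Gamma (1 / 4) / Real.Gamma (1 / 4) - Real.log Real.pi)) (i2.add i3) (fun β => by
      have := log_uncertainty (gB F v β)
      rw [hn, hl] at this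
      exact this)
  rw [integral_const_mul, e1] at key
  simp only [Pi.add_apply] at key
  rw [integral_add i2 i3, e2] at key
  have hlog : 0 ≤ Real.log (2 * Real.pi) := Real.log_nonneg (by linarith [Real.pi_gt_three])
  have hN : 0 ≤ (∫ t, ‖F t‖ ^ 2) * ∫ t, ‖v t‖ ^ 2 :=
    mul_nonneg (integral_nonneg fun x => by positivity) (integral_nonneg fun x => by positivity)
  nlinarith [mul_nonneg hlog hN]
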